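/- Let F : ℝ^N → ℝ^N, λ > 0, μ > 0, L > 0 with: (i) ⟨F(u) − F(w), u − w⟩ ≥ μ‖u − w‖₂² for all u, w ∈ ℝ^N; (ii) ‖F(u) − F(w)‖₂ ≤ L‖u − w‖₂ for all u, w ∈ ℝ^N. Let η ∈ (0, 2μ/L²), and define z : ℝ^N → ℝ^N componentwise by z(x)_i = sign(v_i) · max(|v_i| − ηλ, 0) where v = x − ηF(x). Suppose x* ∈ ℝ^N satisfies the optimality condition ⟨F(x*), q − x*⟩ + λ‖q‖₁ − λ‖x*‖₁ ≥ 0 for all q ∈ ℝ^N. Then, with c := 1/√(1 + 2ημ − η²L²), one has c ∈ (0,1) and ‖z(x) − x*‖₂ ≤ c‖x − x*‖₂ for all x ∈ ℝ^N. -/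

import Mathlib

open scoped RealInnerProductSpace

/-!
The optimality condition says that `x*` is the proximal point of `ηg`, `g = λ‖·‖₁`, at the forward
step `x* - ηF(x*)`, while `z(x)` is the proximal point at `x - ηF(x)`. Proximal maps are
nonexpansive, and with `a = 2ημ - η²L² > 0` the forward step is `√(1 - a)`-Lipschitz, where
`√(1 - a) ≤ 1/√(1 + a)` because `(1 - a)(1 + a) ≤ 1`.
-/

section Subgradient

variable {E : Type*} [NormedAddCommGroup E] [InnerProductSpace ℝ E]

/-- `s` is a subgradient of `g` at `p`. For convex `g`, the point `p` is the proximal point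
`prox_g(v)` exactly when `v - p` is a subgradient of `g` at `p`, and this is how proximal points are
expressed below. -/
def IsSubgradientAt (g : E → ℝ) (s p : E) : Prop :=
  ∀ q, g p + ⟪s, q - p⟫ ≤ g q

namespace IsSubgradientAt

variable {g : E → ℝ} {s t p q v w : E}

lemma const_mul {c : ℝ} (hc : 0 ≤ c) (hs : IsSubgradientAt g s p) :
    IsSubgradientAt (fun u => c * g u) (c • s) p := fun q => by
  have scaled := mul_le_mul_of_nonneg_left (hs q) hc
  rwa [mul_add, ← real_inner_smul_left] at scaled

lemma inner_sub_sub_nonneg (hs : IsSubgradientAt g s p) (ht : IsSubgradientAt g t q) :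
    0 ≤ ⟪s - t, p - q⟫ := by
  have hsq := hs q
  have htp := ht p
  rw [← neg_sub p q, inner_neg_right] at hsq
  rw [inner_sub_left]
  linarith

lemma norm_sub_sq_le_inner_sub (hp : IsSubgradientAt g (v - p) p)
    (hq : IsSubgradientAt g (w - q) q) : ‖p - q‖ ^ 2 ≤ ⟪v - w, p - q⟫ := by
  have monotone := hp.inner_sub_sub_nonneg hq
  rwa [sub_sub_sub_comm, inner_sub_left, real_inner_self_eq_norm_sq, sub_nonneg] at monotone

lemma norm_sub_le_norm_sub (hp : IsSubgradientAt g (v - p) p)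
    (hq : IsSubgradientAt g (w - q) q) : ‖p - q‖ ≤ ‖v - w‖ := by
  have firm : ‖p - q‖ * ‖p - q‖ ≤ ‖v - w‖ * ‖p - q‖ := by
    rw [← sq]
    exact (hp.norm_sub_sq_le_inner_sub hq).trans (real_inner_le_norm _ _)
  obtain hzero | hpos := (norm_nonneg (p - q)).eq_or_lt
  · exact hzero ▸ norm_nonneg _
  · exact le_of_mul_le_mul_right firm hpos

end IsSubgradientAt

lemma isSubgradientAt_const_mul_norm {t : ℝ} {s p : E} (hs : ‖s‖ ≤ t) (hp : ⟪s, p⟫ = t * ‖p‖) :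
    IsSubgradientAt (fun u => t * ‖u‖) s p := fun q => by
  have cauchy_schwarz : ⟪s, q⟫ ≤ t * ‖q‖ :=
    (real_inner_le_norm s q).trans (mul_le_mul_of_nonneg_right hs (norm_nonneg q))
  rw [inner_sub_right]
  linarith

lemma isSubgradientAt_sum_apply {ι : Type*} [Fintype ι] {G : ι → Type*}
    [∀ i, NormedAddCommGroup (G i)] [∀ i, InnerProductSpace ℝ (G i)] {g : ∀ i, G i → ℝ}
    {s p : PiLp 2 G} (h : ∀ i, IsSubgradientAt (g i) (s i) (p i)) :
    IsSubgradientAt (fun u : PiLp 2 G => ∑ i, g i (u i)) s p := fun q => by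
  simp only [PiLp.inner_apply, ← Finset.sum_add_distrib]
  exact Finset.sum_le_sum fun i _ => h i (q i)

end Subgradient

section SoftThreshold

/-- Soft thresholding of `v` at level `t`, the proximal map of `t * |·|` for `0 ≤ t`. -/
noncomputable def softThreshold (t v : ℝ) : ℝ :=
  v.sign * max (|v| - t) 0

lemma sub_softThreshold (t v : ℝ) : v - softThreshold t v = v.sign * min |v| t := by
  have sign_mul_abs : v.sign * |v| = v := by
    obtain hv | rfl | hv := lt_trichotomy v 0
    · rw [Real.sign_of_neg hv, abs_of_neg hv, neg_one_mul, neg_neg]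
    · rw [abs_zero, mul_zero]
    · rw [Real.sign_of_pos hv, abs_of_pos hv, one_mul]
  have abs_sub_max : |v| - max (|v| - t) 0 = min |v| t := by
    rw [← min_sub_sub_left, sub_sub_cancel, sub_zero, min_comm]
  rw [softThreshold, ← abs_sub_max, mul_sub, sign_mul_abs]

lemma abs_sub_softThreshold_le {t : ℝ} (ht : 0 ≤ t) (v : ℝ) : |v - softThreshold t v| ≤ t := by
  have abs_sign_le : |v.sign| ≤ 1 := by
    obtain h | h | h := v.sign_apply_eq <;> simp [h]
  rw [sub_softThreshold, abs_mul, abs_of_nonneg (le_min (abs_nonneg v) ht)]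
  exact (mul_le_of_le_one_left (le_min (abs_nonneg v) ht) abs_sign_le).trans (min_le_right _ _)

lemma softThreshold_mul_sub_softThreshold (t v : ℝ) :
    softThreshold t v * (v - softThreshold t v) = t * |softThreshold t v| := by
  have sign_mul_self : v.sign * v.sign = |v.sign| := by
    obtain h | h | h := v.sign_apply_eq <;> simp [h]
  have max_mul_min : max (|v| - t) 0 * min |v| t = t * max (|v| - t) 0 := by
    obtain h | h := le_total |v| t
    · rw [max_eq_right (sub_nonpos.2 h), zero_mul, mul_zero]
    · rw [min_eq_right h, mul_comm]
  calc softThreshold t v * (v - softThreshold t v)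
      = v.sign * v.sign * (max (|v| - t) 0 * min |v| t) := by
        rw [sub_softThreshold, softThreshold, mul_mul_mul_comm]
    _ = t * |softThreshold t v| := by
        rw [sign_mul_self, max_mul_min, softThreshold, abs_mul,
          abs_of_nonneg (le_max_right (|v| - t) 0), mul_left_comm]

lemma isSubgradientAt_softThreshold {t : ℝ} (ht : 0 ≤ t) (v : ℝ) :
    IsSubgradientAt (fun u => t * |u|) (v - softThreshold t v) (softThreshold t v) :=
  isSubgradientAt_const_mul_norm (abs_sub_softThreshold_le ht v)
    (softThreshold_mul_sub_softThreshold t v)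

lemma isSubgradientAt_l1_of_eq_softThreshold {ι : Type*} [Fintype ι] {t : ℝ}
    (ht : 0 ≤ t) {v p : EuclideanSpace ℝ ι} (hp : ∀ i, p i = softThreshold t (v i)) :
    IsSubgradientAt (fun u : EuclideanSpace ℝ ι => t * ∑ i, |u i|) (v - p) p := by
  simp only [Finset.mul_sum]
  refine isSubgradientAt_sum_apply (g := fun _ r => t * |r|) fun i => ?_
  rw [PiLp.sub_apply, hp i]
  exact isSubgradientAt_softThreshold ht (v i)

end SoftThreshold

section Contraction

lemma one_div_sqrt_one_add_mem_Ioo {a : ℝ} (ha : 0 < a) : 1 / √(1 + a) ∈ Set.Ioo (0 : ℝ) 1 := by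
  have one_lt_sqrt : 1 < √(1 + a) := Real.lt_sqrt_of_sq_lt (by linarith)
  exact ⟨by positivity, (div_lt_one (by positivity)).2 one_lt_sqrt⟩

lemma sqrt_one_sub_le_one_div_sqrt_one_add {a : ℝ} (ha : -1 < a) :
    √(1 - a) ≤ 1 / √(1 + a) := by
  have hpos : 0 < 1 + a := by linarith
  rw [one_div, ← Real.sqrt_inv, inv_eq_one_div]
  refine Real.sqrt_le_sqrt ((le_div_iff₀ hpos).2 ?_)
  linear_combination sq_nonneg a

variable {E : Type*} [NormedAddCommGroup E] [InnerProductSpace ℝ E] {μ L η : ℝ}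

lemma norm_sub_smul_le_of_le_inner {d e : E} (hη : 0 ≤ η) (hmono : μ * ‖d‖ ^ 2 ≤ ⟪e, d⟫)
    (hlip : ‖e‖ ≤ L * ‖d‖) :
    ‖d - η • e‖ ≤ √(1 - (2 * η * μ - η ^ 2 * L ^ 2)) * ‖d‖ := by
  have hlip_sq : ‖e‖ ^ 2 ≤ (L * ‖d‖) ^ 2 := pow_le_pow_left₀ (norm_nonneg e) hlip 2
  have hsq : ‖d - η • e‖ ^ 2 ≤ (1 - (2 * η * μ - η ^ 2 * L ^ 2)) * ‖d‖ ^ 2 := calc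
    ‖d - η • e‖ ^ 2 = ‖d‖ ^ 2 - 2 * η * ⟪e, d⟫ + η ^ 2 * ‖e‖ ^ 2 := by
      rw [norm_sub_sq_real, real_inner_smul_right, real_inner_comm, norm_smul, mul_pow,
        Real.norm_eq_abs, sq_abs, mul_assoc]
    _ ≤ ‖d‖ ^ 2 - 2 * η * (μ * ‖d‖ ^ 2) + η ^ 2 * (L * ‖d‖) ^ 2 := by gcongr
    _ = (1 - (2 * η * μ - η ^ 2 * L ^ 2)) * ‖d‖ ^ 2 := by ring
  rw [← Real.sqrt_sq (norm_nonneg d), ← Real.sqrt_mul' _ (sq_nonneg _)]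
  exact Real.le_sqrt_of_sq_le hsq

theorem stmt_11_general {F z : E → E} {g : E → ℝ} {xs : E} (hL : 0 < L)
    (hmono : ∀ x, μ * ‖x - xs‖ ^ 2 ≤ ⟪F x - F xs, x - xs⟫)
    (hlip : ∀ x, ‖F x - F xs‖ ≤ L * ‖x - xs‖)
    (hη : η ∈ Set.Ioo 0 (2 * μ / L ^ 2))
    (hz : ∀ x, IsSubgradientAt (fun u => η * g u) (x - η • F x - z x) (z x))
    (hxs : IsSubgradientAt g (-F xs) xs) :
    1 / √(1 + 2 * η * μ - η ^ 2 * L ^ 2) ∈ Set.Ioo (0 : ℝ) 1 ∧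
      ∀ x, ‖z x - xs‖ ≤ 1 / √(1 + 2 * η * μ - η ^ 2 * L ^ 2) * ‖x - xs‖ := by
  have hgain : 0 < 2 * η * μ - η ^ 2 * L ^ 2 := by
    have hη_pos : 0 < η := hη.1
    have hηL : η * L ^ 2 < 2 * μ := (lt_div_iff₀ (by positivity)).1 hη.2
    linear_combination η * hηL
  have hfixed : IsSubgradientAt (fun u => η * g u) (xs - η • F xs - xs) xs := by
    rw [sub_sub_cancel_left, ← smul_neg]
    exact hxs.const_mul hη.1.le
  rw [add_sub_assoc]
  refine ⟨one_div_sqrt_one_add_mem_Ioo hgain, fun x => ?_⟩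
  calc ‖z x - xs‖ ≤ ‖(x - η • F x) - (xs - η • F xs)‖ := (hz x).norm_sub_le_norm_sub hfixed
    _ = ‖(x - xs) - η • (F x - F xs)‖ := by rw [sub_sub_sub_comm, smul_sub]
    _ ≤ √(1 - (2 * η * μ - η ^ 2 * L ^ 2)) * ‖x - xs‖ :=
      norm_sub_smul_le_of_le_inner hη.1.le (hmono x) (hlip x)
    _ ≤ 1 / √(1 + (2 * η * μ - η ^ 2 * L ^ 2)) * ‖x - xs‖ := by
      gcongr
      exact sqrt_one_sub_le_one_div_sqrt_one_add (by linarith)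

end Contraction

/-- Contraction property of the proximal step: if `F` is `μ`-strongly monotone
and `L`-Lipschitz, `η ∈ (0, 2μ/L²)`, and `x*` satisfies the optimality
condition, then `z(x) = prox_{ηλ‖·‖₁}(x − ηF(x))` satisfies
`‖z(x) − x*‖ ≤ c‖x − x*‖` with `c = 1/√(1 + 2ημ − η²L²) ∈ (0,1)`. -/
theorem stmt_11 (N : ℕ) (F : EuclideanSpace ℝ (Fin N) → EuclideanSpace ℝ (Fin N))
    (lam μ L : ℝ) (hlam : 0 < lam) (hμ : 0 < μ) (hL : 0 < L)
    (hmono : ∀ u w : EuclideanSpace ℝ (Fin N), ⟪F u - F w, u - w⟫ ≥ μ * ‖u - w‖ ^ 2)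
    (hlip : ∀ u w : EuclideanSpace ℝ (Fin N), ‖F u - F w‖ ≤ L * ‖u - w‖)
    (η : ℝ) (hη : η ∈ Set.Ioo 0 (2 * μ / L ^ 2))
    (z : EuclideanSpace ℝ (Fin N) → EuclideanSpace ℝ (Fin N))
    (hz : ∀ x, ∀ i, z x i =
      Real.sign ((x - η • F x) i) * max (|(x - η • F x) i| - η * lam) 0)
    (xs : EuclideanSpace ℝ (Fin N))
    (hxs : ∀ q : EuclideanSpace ℝ (Fin N),
      ⟪F xs, q - xs⟫ + lam * ∑ i, |q i| - lam * ∑ i, |xs i| ≥ 0) :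
    (1 / Real.sqrt (1 + 2 * η * μ - η ^ 2 * L ^ 2)) ∈ Set.Ioo (0 : ℝ) 1 ∧
      ∀ x : EuclideanSpace ℝ (Fin N),
        ‖z x - xs‖ ≤ (1 / Real.sqrt (1 + 2 * η * μ - η ^ 2 * L ^ 2)) * ‖x - xs‖ := by
  have hprox (x) := isSubgradientAt_l1_of_eq_softThreshold (mul_pos hη.1 hlam).le (hz x)
  refine stmt_11_general (g := fun u => lam * ∑ i, |u i|) hL (hmono · xs) (hlip · xs) hη
    (by simpa only [mul_assoc] using hprox) fun q => ?_
  rw [inner_neg_left]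
  linarith [hxs q]
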